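/- arXiv:1808.01739 — 2 statements merged into one kernel-verified Lean document; each statement's English description precedes it below -/
import Mathlib

section
/- Let X be a σ-sub-Gaussian random variable with mean μ and CDF F, let α ∈ (0,1), and let v_α be the VaR of X at level α. Then for every λ > 0, E[exp(λ·(X − v_α)·𝟙{X ≥ v_α})] ≤ F(v_α) + exp(−λ·v_α + λ·μ + λ²σ²/2) ≤ α + exp(−λ·v_α + λ·μ + λ²σ²/2). -/
open MeasureTheory ProbabilityTheory Real Set

/-- **MGF bound for the truncated excess of a sub-Gaussian random variable.**
For `σ`-sub-Gaussian `X` with mean `μ`, CDF `F` and VaR `v_α` at level `α`,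
for every `λ > 0`:
`E[exp(λ (X − v_α) 𝟙{X ≥ v_α})] ≤ F(v_α) + exp(−λ v_α + λ μ + λ²σ²/2)
  ≤ α + exp(−λ v_α + λ μ + λ²σ²/2)`. -/
theorem mgf_truncated_excess_subGaussian
    {Ω : Type*} [MeasurableSpace Ω] (P : Measure Ω) [IsProbabilityMeasure P]
    (X : Ω → ℝ) (hXmeas : Measurable X) (hXint : Integrable X P)
    (μX : ℝ) (hmean : μX = ∫ ω, X ω ∂P)
    (σ : ℝ) (hσ : 0 < σ)
    (hmgf : ∀ l : ℝ, Integrable (fun ω => exp (l * X ω)) P)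
    (hsubg : ∀ l : ℝ, ∫ ω, exp (l * X ω) ∂P ≤ exp (l * μX + l^2 * σ^2 / 2))
    (F : ℝ → ℝ) (hF : ∀ t, F t = (P {ω | X ω ≤ t}).toReal)
    (hFcont : Continuous F)
    (α : ℝ) (hα : α ∈ Ioo (0:ℝ) 1)
    (v : ℝ) (hv : v = sInf {ξ : ℝ | α ≤ F ξ})
    (l : ℝ) (hl : 0 < l) :
    (∫ ω, exp (l * (if v ≤ X ω then X ω - v else 0)) ∂P)
        ≤ F v + exp (-(l * v) + l * μX + l^2 * σ^2 / 2) ∧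
    F v + exp (-(l * v) + l * μX + l^2 * σ^2 / 2)
        ≤ α + exp (-(l * v) + l * μX + l^2 * σ^2 / 2) := by
  have hms : MeasurableSet {ω | X ω ≤ v} := measurableSet_le hXmeas measurable_const
  refine ⟨?_, ?_⟩
  · have hi1 : Integrable ({ω | X ω ≤ v}.indicator (fun _ => (1:ℝ))) P :=
      (integrable_const (1:ℝ)).indicator hms
    have hi2 : Integrable (fun ω => exp (-(l * v)) * exp (l * X ω)) P :=
      (hmgf l).const_mul _
    have hI1 : ∫ ω, {ω | X ω ≤ v}.indicator (fun _ => (1:ℝ)) ω ∂P = F v := by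
      rw [integral_indicator hms, hF]
      simp [Measure.real]
    calc (∫ ω, exp (l * (if v ≤ X ω then X ω - v else 0)) ∂P)
        ≤ ∫ ω, ({ω | X ω ≤ v}.indicator (fun _ => (1:ℝ)) ω
            + exp (-(l * v)) * exp (l * X ω)) ∂P := by
          apply integral_mono_of_nonneg
          · exact Filter.Eventually.of_forall fun ω => (exp_pos _).le
          · exact hi1.add hi2
          · refine Filter.Eventually.of_forall fun ω => ?_
            have h0 : 0 ≤ {ω | X ω ≤ v}.indicator (fun _ => (1:ℝ)) ω :=
              Set.indicator_nonneg (fun _ _ => zero_le_one) ω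
            have h1 : 0 < exp (-(l * v)) * exp (l * X ω) := by positivity
            by_cases h : v ≤ X ω
            · have : exp (l * (X ω - v)) = exp (-(l * v)) * exp (l * X ω) := by
                rw [← exp_add]; congr 1; ring
              simp only [h, if_true]
              linarith
            · have hm : ω ∈ {ω | X ω ≤ v} := (not_le.mp h).le
              have h2 : {ω | X ω ≤ v}.indicator (fun _ => (1:ℝ)) ω = 1 :=
                Set.indicator_of_mem hm _
              simp only [h, if_false, mul_zero, exp_zero]
              linarith
      _ = F v + exp (-(l * v)) * ∫ ω, exp (l * X ω) ∂P := by
          rw [integral_add hi1 hi2, hI1, integral_const_mul]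
      _ ≤ F v + exp (-(l * v) + l * μX + l^2 * σ^2 / 2) := by
          rw [add_assoc, exp_add]
          have := mul_le_mul_of_nonneg_left (hsubg l) (exp_pos (-(l * v))).le
          linarith
  · have hp : IsProbabilityMeasure (P.map X) := Measure.isProbabilityMeasure_map hXmeas.aemeasurable
    have hFc : F = cdf (P.map X) := by
      funext t
      rw [hF, cdf_eq_real, Measure.real, Measure.map_apply hXmeas measurableSet_Iic]
      rfl
    have hmono : Monotone F := by rw [hFc]; exact monotone_cdf _
    have hlim : Filter.Tendsto F Filter.atBot (nhds 0) := by
      rw [hFc]; exact tendsto_cdf_atBot _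
    obtain ⟨t, ht⟩ := (hlim.eventually_lt_const hα.1).exists
    have hbdd : BddBelow {ξ : ℝ | α ≤ F ξ} :=
      ⟨t, fun ξ hξ => le_of_not_gt fun h => absurd (hmono h.le) (not_le.mpr (ht.trans_le hξ))⟩
    have : F v ≤ α := by
      by_contra! hlt
      have hev := (hFcont.tendsto v).eventually_const_lt hlt
      obtain ⟨ε, hε, hb⟩ := Metric.eventually_nhds_iff.mp hev
      have h1 : α < F (v - ε / 2) := hb (by
        rw [Real.dist_eq, abs_lt]; constructor <;> linarith)
      have h2 : v ≤ v - ε / 2 := by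
        conv_lhs => rw [hv]
        exact csInf_le hbdd h1.le
      linarith
    linarith
end

section
/- Let X be a (σ,b)-sub-exponential random variable with mean μ and CDF F, let α ∈ (0,1), and let v_α be the VaR of X at level α. Then for every λ with 0 < λ < 1/b, E[exp(λ·(X − v_α)·𝟙{X ≥ v_α})] ≤ F(v_α) + exp(−λ·v_α + λ·μ + λ²σ²/2) ≤ α + exp(−λ·v_α + λ·μ + λ²σ²/2). -/
open MeasureTheory ProbabilityTheory Real Set

/-- **MGF bound for the truncated excess of a sub-exponential random variable.**
For `(σ,b)`-sub-exponential `X` with mean `μ`, CDF `F` and VaR `v_α` at level `α`,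
for every `0 < λ < 1/b`:
`E[exp(λ (X − v_α) 𝟙{X ≥ v_α})] ≤ F(v_α) + exp(−λ v_α + λ μ + λ²σ²/2)
  ≤ α + exp(−λ v_α + λ μ + λ²σ²/2)`. -/
theorem mgf_truncated_excess_subExponential
    {Ω : Type*} [MeasurableSpace Ω] (P : Measure Ω) [IsProbabilityMeasure P]
    (X : Ω → ℝ) (hXmeas : Measurable X) (hXint : Integrable X P)
    (μX : ℝ) (hmean : μX = ∫ ω, X ω ∂P)
    (σ : ℝ) (hσ : 0 < σ) (b : ℝ) (hb : 0 < b)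
    (hmgf : ∀ l : ℝ, |l| < 1/b → Integrable (fun ω => exp (l * X ω)) P)
    (hsube : ∀ l : ℝ, |l| < 1/b →
      ∫ ω, exp (l * X ω) ∂P ≤ exp (l * μX + l^2 * σ^2 / 2))
    (F : ℝ → ℝ) (hF : ∀ t, F t = (P {ω | X ω ≤ t}).toReal)
    (hFcont : Continuous F)
    (α : ℝ) (hα : α ∈ Ioo (0:ℝ) 1)
    (v : ℝ) (hv : v = sInf {ξ : ℝ | α ≤ F ξ})
    (l : ℝ) (hl : 0 < l) (hlb : l < 1/b) :
    (∫ ω, exp (l * (if v ≤ X ω then X ω - v else 0)) ∂P)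
        ≤ F v + exp (-(l * v) + l * μX + l^2 * σ^2 / 2) ∧
    F v + exp (-(l * v) + l * μX + l^2 * σ^2 / 2)
        ≤ α + exp (-(l * v) + l * μX + l^2 * σ^2 / 2) := by
  have hms : MeasurableSet {ω | X ω ≤ v} := measurableSet_le hXmeas measurable_const
  have hlabs : |l| < 1/b := by rwa [abs_of_pos hl]
  have hind : Integrable ({ω | X ω ≤ v}.indicator (fun _ => (1:ℝ))) P :=
    (integrable_const (1:ℝ)).indicator hms
  have hexp : Integrable (fun ω => exp (-(l * v)) * exp (l * X ω)) P :=
    (hmgf l hlabs).const_mul _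
  constructor
  · have h1 : (∫ ω, exp (l * (if v ≤ X ω then X ω - v else 0)) ∂P) ≤
        ∫ ω, ({ω | X ω ≤ v}.indicator (fun _ => (1:ℝ)) ω
          + exp (-(l * v)) * exp (l * X ω)) ∂P := by
      apply integral_mono_of_nonneg
      · exact Filter.Eventually.of_forall fun ω => (exp_pos _).le
      · exact hind.add hexp
      · refine Filter.Eventually.of_forall fun ω => ?_
        have hpos : 0 < exp (-(l * v)) * exp (l * X ω) := by positivity
        by_cases h : v ≤ X ω
        · have h0 : 0 ≤ {ω | X ω ≤ v}.indicator (fun _ => (1:ℝ)) ω :=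
            indicator_nonneg (fun _ _ => zero_le_one) ω
          have h2 : exp (l * (X ω - v)) = exp (-(l * v)) * exp (l * X ω) := by
            rw [← exp_add]; congr 1; ring
          simp only [h, if_true]
          linarith
        · have h3 : {ω | X ω ≤ v}.indicator (fun _ => (1:ℝ)) ω = 1 :=
            indicator_of_mem (show ω ∈ {ω | X ω ≤ v} from (not_le.mp h).le) _
          simp only [h, if_false, h3, mul_zero, exp_zero]
          linarith
    rw [integral_add hind hexp, integral_indicator_const _ hms, integral_const_mul] at h1
    have h4 : P.real {ω | X ω ≤ v} = F v := (hF v).symm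
    rw [h4, smul_eq_mul, mul_one] at h1
    have h5 := mul_le_mul_of_nonneg_left (hsube l hlabs) (exp_pos (-(l * v))).le
    rw [← exp_add, ← add_assoc] at h5
    linarith
  · gcongr
    by_contra! hlt
    have : IsProbabilityMeasure (P.map X) := Measure.isProbabilityMeasure_map hXmeas.aemeasurable
    have hFc : ∀ t, F t = cdf (P.map X) t := fun t => by
      rw [hF, cdf_eq_real, Measure.real, Measure.map_apply hXmeas measurableSet_Iic]; rfl
    have hbdd : BddBelow {ξ : ℝ | α ≤ F ξ} := by
      obtain ⟨m, hm⟩ := ((tendsto_cdf_atBot (P.map X)).eventually_lt_const hα.1).exists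
      refine ⟨m, fun ξ hξ => ?_⟩
      by_contra! hc
      have := monotone_cdf (P.map X) hc.le
      have h6 : α ≤ F ξ := hξ
      rw [hFc] at h6
      linarith
    have hnear : ∀ᶠ t in nhds v, α < F t := hFcont.continuousAt.eventually_const_lt hlt
    obtain ⟨ε, hε, hball⟩ := Metric.eventually_nhds_iff.mp hnear
    have h7 : α < F (v - ε/2) := hball (by
      rw [Real.dist_eq, show v - ε/2 - v = -(ε/2) by ring, abs_neg, abs_of_pos (by positivity)]
      linarith)
    have h8 : v ≤ v - ε/2 := by
      conv_lhs => rw [hv]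
      exact csInf_le hbdd h7.le
    linarith
end
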